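/- arXiv:1708.01052 — 2 statements merged into one kernel-verified Lean document; each statement's English description precedes it below -/
import Mathlib

section
/- Let p, q ∈ ℝ, let m > 0 be an integer, and let U_b = [[a,b],[c,d]] be a unitary 2×2 complex matrix. Suppose Φ : ℤ → ℂ² satisfies U^(s)Φ = Φ, Φ^R(0) = 1, and Φ^L(x) = 0 for all x > m. Then, writing r̃ = Φ^L(0) and t̃ = Φ^R(m), the two relations t̃ = e^{iq(m−1)}(c r̃ + d) and r̃ = b e^{ip(m−1)} t̃ hold; consequently, if 1 − b c e^{i(p+q)(m−1)} ≠ 0, then t̃ = d e^{iq(m−1)}/(1 − b c e^{i(p+q)(m−1)}) and r̃ = b d e^{ip(m−1)} e^{iq(m−1)}/(1 − b c e^{i(p+q)(m−1)}). -/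
open Complex

noncomputable section

/-- One step of the discrete-time quantum walk on `ℤ` with coin entries
`a b c d : ℤ → ℂ`, acting on states `Ψ : ℤ → ℂ × ℂ` (left, right components). -/
def qwStep (a b c d : ℤ → ℂ) (Ψ : ℤ → ℂ × ℂ) : ℤ → ℂ × ℂ :=
  fun x => (a (x + 1) * (Ψ (x + 1)).1 + b (x + 1) * (Ψ (x + 1)).2,
            c (x - 1) * (Ψ (x - 1)).1 + d (x - 1) * (Ψ (x - 1)).2)

/-- Coin entries of the double-barrier walk. -/
def dbA (p : ℝ) (m : ℤ) (a : ℂ) : ℤ → ℂ := fun x => if x = 0 ∨ x = m then a else exp (I * p)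

def dbB (m : ℤ) (b : ℂ) : ℤ → ℂ := fun x => if x = 0 ∨ x = m then b else 0

def dbC (m : ℤ) (c : ℂ) : ℤ → ℂ := fun x => if x = 0 ∨ x = m then c else 0

def dbD (q : ℝ) (m : ℤ) (d : ℂ) : ℤ → ℂ := fun x => if x = 0 ∨ x = m then d else exp (I * q)

/-!
Between the barriers the coins are diagonal, so the two components decouple there: the right-moving
amplitude emitted by the barrier at `0` reaches `m` multiplied by `e^{iq(m-1)}`, and the left-moving
amplitude emitted by the barrier at `m` reaches `0` multiplied by `e^{ip(m-1)}`. As nothing enters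
from the right of `m`, these two facts form a linear system for the reflected and transmitted
amplitudes, whose determinant is `1 - b c e^{i(p+q)(m-1)}`.
-/

theorem exp_mul_natCast_eq_prod_range {z : ℂ} {f : ℕ → ℂ} {n : ℕ} (hf : ∀ k < n, f k = exp z) :
    exp (z * n) = ∏ k ∈ Finset.range n, f k := by
  rw [Finset.prod_congr rfl fun k hk => hf k (Finset.mem_range.mp hk), Finset.prod_const,
    Finset.card_range, mul_comm, exp_nat_mul]

section GeneralCoins

variable {a b c d : ℤ → ℂ} {Φ : ℤ → ℂ × ℂ}

theorem fst_eq_of_qwStep_eq_self (hΦ : qwStep a b c d Φ = Φ) (x : ℤ) :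
    (Φ x).1 = a (x + 1) * (Φ (x + 1)).1 + b (x + 1) * (Φ (x + 1)).2 :=
  congrArg Prod.fst (congrFun hΦ x).symm

theorem snd_add_one_eq_of_qwStep_eq_self (hΦ : qwStep a b c d Φ = Φ) (x : ℤ) :
    (Φ (x + 1)).2 = c x * (Φ x).1 + d x * (Φ x).2 := by
  simpa only [qwStep, add_sub_cancel_right] using congrArg Prod.snd (congrFun hΦ (x + 1)).symm

theorem fst_eq_prod_mul_fst_add (hΦ : qwStep a b c d Φ = Φ) (x : ℤ) (n : ℕ)
    (hb : ∀ k < n, b (x + k + 1) = 0) :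
    (Φ x).1 = (∏ k ∈ Finset.range n, a (x + k + 1)) * (Φ (x + n)).1 := by
  induction n with
  | zero => simp
  | succ n ih =>
    rw [ih fun k hk => hb k (hk.trans n.lt_succ_self), fst_eq_of_qwStep_eq_self hΦ (x + n),
      hb n n.lt_succ_self, Finset.prod_range_succ, Nat.cast_succ, ← add_assoc]
    ring

theorem snd_add_eq_prod_mul_snd (hΦ : qwStep a b c d Φ = Φ) (x : ℤ) (n : ℕ)
    (hc : ∀ k < n, c (x + k) = 0) :
    (Φ (x + n)).2 = (∏ k ∈ Finset.range n, d (x + k)) * (Φ x).2 := by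
  induction n with
  | zero => simp
  | succ n ih =>
    rw [Nat.cast_succ, ← add_assoc, snd_add_one_eq_of_qwStep_eq_self hΦ (x + n),
      hc n n.lt_succ_self, ih fun k hk => hc k (hk.trans n.lt_succ_self), Finset.prod_range_succ]
    ring

end GeneralCoins

section DoubleBarrier

variable {p q : ℝ} {m : ℤ} {a b c d : ℂ} {Φ : ℤ → ℂ × ℂ}

theorem doubleBarrier_fst_zero_eq_exp_mul (hm : 0 < m)
    (hΦ : qwStep (dbA p m a) (dbB m b) (dbC m c) (dbD q m d) Φ = Φ) :
    (Φ 0).1 = exp (I * p * (m - 1)) * (a * (Φ m).1 + b * (Φ m).2) := by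
  obtain ⟨n, rfl⟩ : ∃ n : ℕ, m = n + 1 := ⟨(m - 1).toNat, by omega⟩
  have free : ∀ k < n, ¬((0 : ℤ) + k + 1 = 0 ∨ (0 : ℤ) + k + 1 = n + 1) := by omega
  have emitted : (Φ n).1 = a * (Φ (n + 1)).1 + b * (Φ (n + 1)).2 := by
    simpa [dbA, dbB] using fst_eq_of_qwStep_eq_self hΦ n
  have phase : exp (I * p * n) = ∏ k ∈ Finset.range n, dbA p (n + 1) a (0 + k + 1) :=
    exp_mul_natCast_eq_prod_range fun k hk => if_neg (free k hk)
  have transported := fst_eq_prod_mul_fst_add hΦ 0 n fun k hk => if_neg (free k hk)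
  rw [transported, ← phase, zero_add, emitted]
  push_cast
  rw [add_sub_cancel_right]

theorem doubleBarrier_snd_eq_exp_mul (hm : 0 < m)
    (hΦ : qwStep (dbA p m a) (dbB m b) (dbC m c) (dbD q m d) Φ = Φ) :
    (Φ m).2 = exp (I * q * (m - 1)) * (c * (Φ 0).1 + d * (Φ 0).2) := by
  obtain ⟨n, rfl⟩ : ∃ n : ℕ, m = 1 + n := ⟨(m - 1).toNat, by omega⟩
  have free : ∀ k < n, ¬((1 : ℤ) + k = 0 ∨ (1 : ℤ) + k = 1 + n) := by omega
  have emitted : (Φ 1).2 = c * (Φ 0).1 + d * (Φ 0).2 := by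
    simpa [dbC, dbD] using snd_add_one_eq_of_qwStep_eq_self hΦ 0
  have phase : exp (I * q * n) = ∏ k ∈ Finset.range n, dbD q (1 + n) d (1 + k) :=
    exp_mul_natCast_eq_prod_range fun k hk => if_neg (free k hk)
  have transported := snd_add_eq_prod_mul_snd hΦ 1 n fun k hk => if_neg (free k hk)
  rw [transported, ← phase, emitted]
  push_cast
  rw [add_sub_cancel_left]

theorem doubleBarrier_fst_eq_zero_of_fst_add_one (hm : 0 < m)
    (hΦ : qwStep (dbA p m a) (dbB m b) (dbC m c) (dbD q m d) Φ = Φ)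
    (hL : (Φ (m + 1)).1 = 0) : (Φ m).1 = 0 := by
  have free : dbB m b (m + 1) = 0 := if_neg (by omega)
  rw [fst_eq_of_qwStep_eq_self hΦ m, hL, free, mul_zero, zero_mul, add_zero]

end DoubleBarrier

theorem eq_div_and_eq_div_of_feedback {K : Type*} [Field K] {P Q b c s r t : K}
    (ht : t = Q * (c * r + s)) (hr : r = b * P * t) (hne : 1 - b * c * (P * Q) ≠ 0) :
    t = s * Q / (1 - b * c * (P * Q)) ∧ r = b * s * P * Q / (1 - b * c * (P * Q)) := by
  rw [eq_div_iff hne, eq_div_iff hne]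
  constructor
  · linear_combination ht + Q * c * hr
  · linear_combination hr + b * P * ht

theorem stationary_state_rt_relations_general
    (p q : ℝ) (m : ℤ) (hm : 0 < m) (a b c d : ℂ) (Φ : ℤ → ℂ × ℂ)
    (hΦ : qwStep (dbA p m a) (dbB m b) (dbC m c) (dbD q m d) Φ = Φ)
    (hL : (Φ (m + 1)).1 = 0) :
    (Φ m).2 = exp (I * q * (m - 1)) * (c * (Φ 0).1 + d * (Φ 0).2) ∧
    (Φ 0).1 = b * exp (I * p * (m - 1)) * (Φ m).2 ∧
    (1 - b * c * exp (I * (p + q) * (m - 1)) ≠ 0 →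
      (Φ m).2 = d * (Φ 0).2 * exp (I * q * (m - 1)) /
        (1 - b * c * exp (I * (p + q) * (m - 1))) ∧
      (Φ 0).1 = b * (d * (Φ 0).2) * exp (I * p * (m - 1)) * exp (I * q * (m - 1)) /
        (1 - b * c * exp (I * (p + q) * (m - 1)))) := by
  have transmitted := doubleBarrier_snd_eq_exp_mul hm hΦ
  have reflected : (Φ 0).1 = b * exp (I * p * (m - 1)) * (Φ m).2 := by
    rw [doubleBarrier_fst_zero_eq_exp_mul hm hΦ, doubleBarrier_fst_eq_zero_of_fst_add_one hm hΦ hL]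
    ring
  have phase_mul : exp (I * (p + q) * (m - 1)) =
      exp (I * p * (m - 1)) * exp (I * q * (m - 1)) := by
    rw [← exp_add, mul_add, add_mul]
  rw [phase_mul]
  exact ⟨transmitted, reflected, eq_div_and_eq_div_of_feedback transmitted reflected⟩

theorem stationary_state_rt_relations
    (p q : ℝ) (m : ℤ) (hm : 0 < m) (a b c d : ℂ)
    (hU : !![a, b; c, d] ∈ Matrix.unitaryGroup (Fin 2) ℂ)
    (Φ : ℤ → ℂ × ℂ)
    (hΦ : qwStep (dbA p m a) (dbB m b) (dbC m c) (dbD q m d) Φ = Φ)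
    (h0 : (Φ 0).2 = 1) (hL : ∀ x : ℤ, m < x → (Φ x).1 = 0) :
    (Φ m).2 = exp (I * q * (m - 1)) * (c * (Φ 0).1 + d) ∧
    (Φ 0).1 = b * exp (I * p * (m - 1)) * (Φ m).2 ∧
    (1 - b * c * exp (I * (p + q) * (m - 1)) ≠ 0 →
      (Φ m).2 = d * exp (I * q * (m - 1)) / (1 - b * c * exp (I * (p + q) * (m - 1))) ∧
      (Φ 0).1 = b * d * exp (I * p * (m - 1)) * exp (I * q * (m - 1)) /
        (1 - b * c * exp (I * (p + q) * (m - 1)))) := by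
  simpa only [h0, mul_one] using
    stationary_state_rt_relations_general p q m hm a b c d Φ hΦ (hL (m + 1) (lt_add_one m))
end
end

section
/- Let p, q ∈ ℝ, let m > 0 be an integer, and let U_b = [[a,b],[c,d]] be a unitary 2×2 complex matrix with a ≠ 0 and d ≠ 0. Then the complex vector space of all states Φ : ℤ → ℂ² satisfying U^(s)Φ = Φ has dimension exactly 2; more precisely, the linear map sending such a stationary state Φ to Φ(0) ∈ ℂ² is a linear isomorphism onto ℂ². In particular, every stationary state is a linear combination of the state corresponding to injection of quantum walkers from the left (normalized by Φ^R(0) = 1, Φ^L(x) = 0 for x > m) and the state corresponding to injection from the right (normalized by Φ̃^L(m) = 1, Φ̃^R(x) = 0 for x < 0). -/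
open Complex

noncomputable section

/-- The quantum walk evolution as a `ℂ`-linear map on states. -/
def qwStepL (a b c d : ℤ → ℂ) : (ℤ → ℂ × ℂ) →ₗ[ℂ] (ℤ → ℂ × ℂ) where
  toFun := qwStep a b c d
  map_add' Ψ Φ := by
    funext x
    simp only [qwStep, Pi.add_apply, Prod.fst_add, Prod.snd_add, Prod.mk_add_mk]
    exact Prod.ext (by ring) (by ring)
  map_smul' r Ψ := by
    funext x
    simp only [qwStep, Pi.smul_apply, Prod.smul_fst, Prod.smul_snd, Prod.smul_mk,
      RingHom.id_apply, smul_eq_mul]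
    exact Prod.ext (by ring) (by ring)

/-- The space of stationary states of the double-barrier walk. -/
def statSpace (p q : ℝ) (m : ℤ) (a b c d : ℂ) : Submodule ℂ (ℤ → ℂ × ℂ) :=
  LinearMap.ker (qwStepL (dbA p m a) (dbB m b) (dbC m c) (dbD q m d) - LinearMap.id)

/-!
When no `a x` and no `d x` vanishes, the stationarity equation relates `Φ x` and `Φ (x + 1)` by a
bijection of `ℂ × ℂ` (the transfer map), so a stationary state is an orbit of these bijections and
is determined by an arbitrary prescribed value at one site.

A state injected from the right has vanishing right component to the left of the barriers, and
since the free coin does not mix components, also at the origin. The state injected from the left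
has right component `1` there, so the two values at the origin span `ℂ × ℂ`.
-/

theorem existsUnique_forall_add_one_eq {V : Type*} (T : ℤ → V ≃ V) (x₀ : ℤ) (v : V) :
    ∃! Φ : ℤ → V, Φ x₀ = v ∧ ∀ x, Φ (x + 1) = T x (Φ x) := by
  refine existsUnique_of_exists_of_unique ?_ ?_
  · refine ⟨fun x => x.inductionOn' x₀ v (fun k _ w => T k w) (fun k _ w => (T (k - 1)).symm w),
      Int.inductionOn'_self, fun x => ?_⟩
    rcases le_or_gt x₀ x with hx | hx
    · exact Int.inductionOn'_add_one hx
    · have hback := Int.inductionOn'_sub_one (zero := v) (succ := fun k _ w => T k w)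
        (pred := fun k _ w => (T (k - 1)).symm w) (Int.add_one_le_iff.2 hx)
      simp only [add_sub_cancel_right] at hback
      exact (T x).symm_apply_eq.1 hback.symm
  · rintro Φ Ψ ⟨hΦ₀, hΦ⟩ ⟨hΨ₀, hΨ⟩
    funext x
    induction x using Int.inductionOn' (b := x₀) with
    | zero => rw [hΦ₀, hΨ₀]
    | succ k _ ih => rw [hΦ, hΨ, ih]
    | pred k _ ih =>
      apply (T (k - 1)).injective
      rwa [← hΦ, ← hΨ, sub_add_cancel]

section Field

variable {K : Type*} [Field K]

theorem exists_eq_smul_add_smul {v₁ v₂ : K × K} (h₁ : v₁.2 ≠ 0) (h₂ : v₂.2 = 0)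
    (hv₂ : v₂ ≠ 0) (v : K × K) : ∃ c₁ c₂ : K, v = c₁ • v₁ + c₂ • v₂ := by
  have hfst : v₂.1 ≠ 0 := fun h => hv₂ (Prod.ext h h₂)
  refine ⟨v.2 / v₁.2, (v.1 - v.2 / v₁.2 * v₁.1) / v₂.1, Prod.ext ?_ ?_⟩
  · simp [hfst]
  · simp [h₁, h₂]

/-- The transfer map `(l, r) ↦ (l', r')` between neighbouring sites of a stationary state, obtained
by solving `l = α * l' + β * r'` and `r' = γ * l + δ * r` for `(l', r')`, or backwards for `(l, r)`.
Here `α, β` are coin entries at the right site and `γ, δ` coin entries at the left site. -/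
def transferEquiv {α δ : K} (β γ : K) (hα : α ≠ 0) (hδ : δ ≠ 0) : K × K ≃ K × K where
  toFun v := ((v.1 - β * (γ * v.1 + δ * v.2)) / α, γ * v.1 + δ * v.2)
  invFun w := (α * w.1 + β * w.2, (w.2 - γ * (α * w.1 + β * w.2)) / δ)
  left_inv v := by ext <;> field_simp <;> ring
  right_inv w := by ext <;> field_simp <;> ring

theorem eq_transferEquiv_apply_iff {α β γ δ : K} (hα : α ≠ 0) (hδ : δ ≠ 0) {v w : K × K} :
    w = transferEquiv β γ hα hδ v ↔
      α * w.1 + β * w.2 = v.1 ∧ γ * v.1 + δ * v.2 = w.2 := by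
  simp only [transferEquiv, Equiv.coe_fn_mk, Prod.ext_iff, eq_div_iff hα]
  constructor <;>
  · rintro ⟨hfst, hsnd⟩
    exact ⟨by rw [hsnd]; linear_combination hfst, hsnd.symm⟩

end Field

section Stationary

variable {a b c d : ℤ → ℂ}

theorem qwStep_eq_self_iff {Φ : ℤ → ℂ × ℂ} :
    qwStep a b c d Φ = Φ ↔ ∀ x,
      a (x + 1) * (Φ (x + 1)).1 + b (x + 1) * (Φ (x + 1)).2 = (Φ x).1 ∧
      c x * (Φ x).1 + d x * (Φ x).2 = (Φ (x + 1)).2 := by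
  simp only [funext_iff, qwStep, Prod.ext_iff, forall_and]
  refine and_congr_right' ⟨fun h x => ?_, fun h x => ?_⟩
  · simpa only [add_sub_cancel_right] using h (x + 1)
  · simpa only [sub_add_cancel] using h (x - 1)

theorem existsUnique_qwStep_eq_self (ha : ∀ x, a x ≠ 0) (hd : ∀ x, d x ≠ 0) (x₀ : ℤ)
    (v : ℂ × ℂ) : ∃! Φ : ℤ → ℂ × ℂ, Φ x₀ = v ∧ qwStep a b c d Φ = Φ := by
  simpa only [qwStep_eq_self_iff, eq_transferEquiv_apply_iff] using
    existsUnique_forall_add_one_eq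
      (fun x => transferEquiv (b (x + 1)) (c x) (ha (x + 1)) (hd x)) x₀ v

variable (a b c d) in
/-- The space of stationary states of the walk with arbitrary site-dependent coins; `statSpace` is
its instance for the double-barrier coins. -/
def stationarySpace : Submodule ℂ (ℤ → ℂ × ℂ) :=
  LinearMap.ker (qwStepL a b c d - LinearMap.id)

theorem mem_stationarySpace {Φ : ℤ → ℂ × ℂ} :
    Φ ∈ stationarySpace a b c d ↔ qwStep a b c d Φ = Φ := by
  rw [stationarySpace, LinearMap.mem_ker, LinearMap.sub_apply, sub_eq_zero]
  rfl

theorem bijective_proj_comp_subtype_stationarySpace (ha : ∀ x, a x ≠ 0) (hd : ∀ x, d x ≠ 0)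
    (x₀ : ℤ) : Function.Bijective
      (LinearMap.proj x₀ ∘ₗ (stationarySpace a b c d).subtype :
        stationarySpace a b c d →ₗ[ℂ] ℂ × ℂ) := by
  rw [Function.bijective_iff_existsUnique]
  intro v
  obtain ⟨Φ, ⟨hΦ₀, hΦ⟩, huniq⟩ := existsUnique_qwStep_eq_self (b := b) (c := c) ha hd x₀ v
  exact ⟨⟨Φ, mem_stationarySpace.2 hΦ⟩, hΦ₀,
    fun Ψ hΨ₀ => Subtype.ext (huniq Ψ ⟨hΨ₀, mem_stationarySpace.1 Ψ.2⟩)⟩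

/-- Evaluation at the site `x₀` as a linear isomorphism from the stationary states to `ℂ × ℂ`. -/
def stationaryEvalEquiv (ha : ∀ x, a x ≠ 0) (hd : ∀ x, d x ≠ 0) (x₀ : ℤ) :
    stationarySpace a b c d ≃ₗ[ℂ] ℂ × ℂ :=
  LinearEquiv.ofBijective _ (bijective_proj_comp_subtype_stationarySpace ha hd x₀)

theorem stationaryEvalEquiv_apply (ha : ∀ x, a x ≠ 0) (hd : ∀ x, d x ≠ 0) (x₀ : ℤ)
    (Φ : stationarySpace a b c d) :
    stationaryEvalEquiv ha hd x₀ Φ = (Φ : ℤ → ℂ × ℂ) x₀ :=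
  rfl

theorem finrank_stationarySpace (ha : ∀ x, a x ≠ 0) (hd : ∀ x, d x ≠ 0) :
    Module.finrank ℂ (stationarySpace a b c d) = 2 := by
  rw [(stationaryEvalEquiv ha hd 0).finrank_eq, Module.finrank_prod, Module.finrank_self]

theorem exists_eq_smul_add_smul_of_stationary (ha : ∀ x, a x ≠ 0) (hd : ∀ x, d x ≠ 0) {x₀ : ℤ}
    (hc : c x₀ = 0) {Φ₁ Φ₂ : stationarySpace a b c d} (h₁ : ((Φ₁ : ℤ → ℂ × ℂ) (x₀ + 1)).2 ≠ 0)
    (h₂ : ((Φ₂ : ℤ → ℂ × ℂ) x₀).2 = 0) (hΦ₂ : Φ₂ ≠ 0) (Φ : stationarySpace a b c d) :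
    ∃ c₁ c₂ : ℂ, Φ = c₁ • Φ₁ + c₂ • Φ₂ := by
  let e := stationaryEvalEquiv (b := b) (c := c) ha hd (x₀ + 1)
  have hsnd : (e Φ₂).2 = 0 := by
    have hstep := (qwStep_eq_self_iff.1 (mem_stationarySpace.1 Φ₂.2) x₀).2
    rw [hc, h₂, zero_mul, mul_zero, add_zero] at hstep
    exact hstep.symm
  obtain ⟨c₁, c₂, hv⟩ :=
    exists_eq_smul_add_smul (v₁ := e Φ₁) h₁ hsnd (e.map_ne_zero_iff.2 hΦ₂) (e Φ)
  exact ⟨c₁, c₂, e.injective (by rw [hv, map_add, map_smul, map_smul])⟩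

theorem stationary_states_two_dimensional_general (ha : ∀ x, a x ≠ 0) (hd : ∀ x, d x ≠ 0) :
    Module.finrank ℂ (stationarySpace a b c d) = 2 ∧
    (∀ x₀, ∃ e : stationarySpace a b c d ≃ₗ[ℂ] ℂ × ℂ,
      ∀ Φ : stationarySpace a b c d, e Φ = (Φ : ℤ → ℂ × ℂ) x₀) ∧
    (∀ Φ Φ₁ Φ₂ : ℤ → ℂ × ℂ,
      qwStep a b c d Φ = Φ → qwStep a b c d Φ₁ = Φ₁ → qwStep a b c d Φ₂ = Φ₂ →
      ∀ x₀, c x₀ = 0 → (Φ₁ (x₀ + 1)).2 ≠ 0 → (Φ₂ x₀).2 = 0 → Φ₂ ≠ 0 →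
      ∃ c₁ c₂ : ℂ, Φ = c₁ • Φ₁ + c₂ • Φ₂) := by
  refine ⟨finrank_stationarySpace ha hd,
    fun x₀ => ⟨stationaryEvalEquiv ha hd x₀, stationaryEvalEquiv_apply ha hd x₀⟩, ?_⟩
  intro Φ Φ₁ Φ₂ h h₁ h₂ x₀ hc hR₁ hR₂ hΦ₂
  rw [← mem_stationarySpace] at h h₁ h₂
  obtain ⟨c₁, c₂, heq⟩ := exists_eq_smul_add_smul_of_stationary ha hd hc
    (Φ₁ := ⟨Φ₁, h₁⟩) (Φ₂ := ⟨Φ₂, h₂⟩) hR₁ hR₂ (by simpa using hΦ₂) ⟨Φ, h⟩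
  exact ⟨c₁, c₂, congrArg Subtype.val heq⟩

end Stationary

theorem dbA_ne_zero (p : ℝ) (m : ℤ) {a : ℂ} (ha : a ≠ 0) (x : ℤ) : dbA p m a x ≠ 0 := by
  unfold dbA
  split_ifs
  exacts [ha, exp_ne_zero _]

theorem dbD_ne_zero (q : ℝ) (m : ℤ) {d : ℂ} (hd : d ≠ 0) (x : ℤ) : dbD q m d x ≠ 0 :=
  dbA_ne_zero q m hd x

theorem dbC_of_neg {m x : ℤ} (hm : 0 ≤ m) (c : ℂ) (hx : x < 0) : dbC m c x = 0 :=
  if_neg (by lia)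

theorem stationary_states_two_dimensional
    (p q : ℝ) (m : ℤ) (hm : 0 < m) (a b c d : ℂ)
    (hU : !![a, b; c, d] ∈ Matrix.unitaryGroup (Fin 2) ℂ)
    (ha : a ≠ 0) (hd : d ≠ 0) :
    Module.finrank ℂ (statSpace p q m a b c d) = 2 ∧
    (∃ e : statSpace p q m a b c d ≃ₗ[ℂ] ℂ × ℂ,
      ∀ Φ : statSpace p q m a b c d, e Φ = (Φ : ℤ → ℂ × ℂ) 0) ∧
    (∀ Φ Φ₁ Φ₂ : ℤ → ℂ × ℂ,
      qwStep (dbA p m a) (dbB m b) (dbC m c) (dbD q m d) Φ = Φ →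
      qwStep (dbA p m a) (dbB m b) (dbC m c) (dbD q m d) Φ₁ = Φ₁ →
      qwStep (dbA p m a) (dbB m b) (dbC m c) (dbD q m d) Φ₂ = Φ₂ →
      (Φ₁ 0).2 = 1 → (∀ x : ℤ, m < x → (Φ₁ x).1 = 0) →
      (Φ₂ m).1 = 1 → (∀ x : ℤ, x < 0 → (Φ₂ x).2 = 0) →
      ∃ c₁ c₂ : ℂ, Φ = c₁ • Φ₁ + c₂ • Φ₂) := by
  obtain ⟨hdim, heval, hspan⟩ := stationary_states_two_dimensional_general
    (b := dbB m b) (c := dbC m c) (dbA_ne_zero p m ha) (dbD_ne_zero q m hd)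
  refine ⟨hdim, heval 0, fun Φ Φ₁ Φ₂ h h₁ h₂ hR₁ _ hL₂ hR₂ =>
    hspan Φ Φ₁ Φ₂ h h₁ h₂ (-1) (dbC_of_neg hm.le c neg_one_lt_zero) ?_
      (hR₂ (-1) neg_one_lt_zero) ?_⟩
  · simp [hR₁]
  · rintro rfl
    simp at hL₂
end
end
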